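/- arXiv:2604.08860 — 2 statements merged into one kernel-verified Lean document; each statement's English description precedes it below -/
import Mathlib

section
/- Consider the networked control causal factorization over a horizon T with finite alphabets. Then the mutual information between the disclosed variables and the private input sequence decomposes as I(S^T, U^T; Y^T) = Σ_{t=2}^T I(S_t; Y^{t-1} | S^{t-1}, U^{t-1}). -/
open scoped BigOperators Classical

noncomputable section

namespace NCS

/-- Probability of an event under a pmf `P` on a finite sample space. -/
def pr {Ω : Type} [Fintype Ω] (P : Ω → ℝ) (E : Ω → Prop) : ℝ :=
  ∑ ω, if E ω then P ω else 0

/-- Conditional probability `P(E | F)`, as a ratio of probabilities. -/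
def condPr {Ω : Type} [Fintype Ω] (P : Ω → ℝ) (E F : Ω → Prop) : ℝ :=
  pr P (fun ω => E ω ∧ F ω) / pr P F

/-- Mutual information `I(f ; g)` between two finitely-valued random variables
`f` and `g` defined on a finite sample space with pmf `P` (natural logarithm;
summands with zero probability vanish since `0 * log _ = 0`). -/
def MI {Ω A B : Type} [Fintype Ω] [Fintype A] [Fintype B]
    (P : Ω → ℝ) (f : Ω → A) (g : Ω → B) : ℝ :=
  ∑ a : A, ∑ b : B,
    pr P (fun ω => f ω = a ∧ g ω = b) *
      Real.log (pr P (fun ω => f ω = a ∧ g ω = b) /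
        (pr P (fun ω => f ω = a) * pr P (fun ω => g ω = b)))

/-- Conditional mutual information `I(f ; g | h)`. -/
def condMI {Ω A B C : Type} [Fintype Ω] [Fintype A] [Fintype B] [Fintype C]
    (P : Ω → ℝ) (f : Ω → A) (g : Ω → B) (h : Ω → C) : ℝ :=
  ∑ a : A, ∑ b : B, ∑ c : C,
    pr P (fun ω => f ω = a ∧ g ω = b ∧ h ω = c) *
      Real.log (condPr P (fun ω => f ω = a ∧ g ω = b) (fun ω => h ω = c) /
        (condPr P (fun ω => f ω = a) (fun ω => h ω = c) *
          condPr P (fun ω => g ω = b) (fun ω => h ω = c)))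


/-! ### The networked control causal factorization -/

variable {T : ℕ} {X Y Z S U : Type}

/-- The strict history `a^{t-1} = (a_1, …, a_{t-1})` of a trajectory (0-indexed). -/
def hist {A : Type} (f : Fin T → A) (t : Fin T) : Fin t.1 → A :=
  fun i => f ⟨i.1, lt_trans i.2 t.2⟩

/-- The inclusive history `a^t = (a_1, …, a_t)` of a trajectory (0-indexed). -/
def histIncl {A : Type} (f : Fin T → A) (t : Fin T) : Fin (t.1 + 1) → A :=
  fun i => f ⟨i.1, lt_of_le_of_lt (Nat.lt_succ_iff.mp i.2) t.2⟩

/-- Drop the last entry of a history. -/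
def trunc {A : Type} {n : ℕ} (f : Fin (n + 1) → A) : Fin n → A :=
  fun i => f ⟨i.1, Nat.lt_succ_of_lt i.2⟩

/-- The previous value `a_{t-1}`, or `none` at the initial time (vacuous conditioning). -/
def prevO {A : Type} (f : Fin T → A) (t : Fin T) : Option A :=
  if t.1 = 0 then none
  else some (f ⟨t.1 - 1, lt_of_le_of_lt (Nat.sub_le _ _) t.2⟩)

/-- The previous triple `(x_{t-1}, y_{t-1}, u_{t-1})`, or `none` at the initial time. -/
def prev3 (x : Fin T → X) (y : Fin T → Y) (u : Fin T → U) (t : Fin T) :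
    Option (X × Y × U) :=
  if t.1 = 0 then none
  else some (x ⟨t.1 - 1, lt_of_le_of_lt (Nat.sub_le _ _) t.2⟩,
             y ⟨t.1 - 1, lt_of_le_of_lt (Nat.sub_le _ _) t.2⟩,
             u ⟨t.1 - 1, lt_of_le_of_lt (Nat.sub_le _ _) t.2⟩)

/-- The fixed conditional pmfs (kernels) `P_Y(y_t | y_{t-1})`,
`P_X(x_t | x_{t-1}, y_{t-1}, u_{t-1})`, `P_Z(z_t | x_t)`; conditioning on `none`
encodes the vacuous conditioning at `t = 1`. -/
structure Kernels (X Y Z U : Type) [Fintype X] [Fintype Y] [Fintype Z] [Fintype U] where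
  PY : Option Y → Y → ℝ
  PX : Option (X × Y × U) → X → ℝ
  PZ : X → Z → ℝ
  PY_nonneg : ∀ p y, 0 ≤ PY p y
  PY_sum : ∀ p, ∑ y, PY p y = 1
  PX_nonneg : ∀ p x, 0 ≤ PX p x
  PX_sum : ∀ p, ∑ x, PX p x = 1
  PZ_nonneg : ∀ x z, 0 ≤ PZ x z
  PZ_sum : ∀ x, ∑ z, PZ x z = 1

/-- A quantizer policy family `π^e_t(s_t | z^t, s^{t-1}, u^{t-1})`. -/
def QPol (T : ℕ) (Z S U : Type) : Type :=
  (t : Fin T) → (Fin (t.1 + 1) → Z) → (Fin t.1 → S) → (Fin t.1 → U) → S → ℝ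

/-- A controller policy family `π^c_t(u_t | s^t, u^{t-1})`. -/
def CPol (T : ℕ) (S U : Type) : Type :=
  (t : Fin T) → (Fin (t.1 + 1) → S) → (Fin t.1 → U) → U → ℝ

/-- `π^e` is a family of conditional pmfs. -/
def IsQPol [Fintype S] (πe : QPol T Z S U) : Prop :=
  (∀ t zs ss us st, 0 ≤ πe t zs ss us st) ∧ (∀ t zs ss us, ∑ st, πe t zs ss us st = 1)

/-- `π^c` is a family of conditional pmfs. -/
def IsCPol [Fintype U] (πc : CPol T S U) : Prop :=
  (∀ t ss us ut, 0 ≤ πc t ss us ut) ∧ (∀ t ss us, ∑ ut, πc t ss us ut = 1)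

/-- The sample space of full trajectories `(x^T, y^T, z^T, s^T, u^T)`. -/
abbrev Traj (T : ℕ) (X Y Z S U : Type) : Type :=
  (Fin T → X) × (Fin T → Y) × (Fin T → Z) × (Fin T → S) × (Fin T → U)

def trX (ω : Traj T X Y Z S U) : Fin T → X := ω.1
def trY (ω : Traj T X Y Z S U) : Fin T → Y := ω.2.1
def trZ (ω : Traj T X Y Z S U) : Fin T → Z := ω.2.2.1
def trS (ω : Traj T X Y Z S U) : Fin T → S := ω.2.2.2.1
def trU (ω : Traj T X Y Z S U) : Fin T → U := ω.2.2.2.2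

variable [Fintype X] [Fintype Y] [Fintype Z] [Fintype S] [Fintype U]

/-- The joint pmf of the networked control causal factorization:
`P(x^T, y^T, z^T, s^T, u^T) = ∏_t P_Y(y_t|y_{t-1}) P_X(x_t|x_{t-1},y_{t-1},u_{t-1})
P_Z(z_t|x_t) π^e_t(s_t|z^t,s^{t-1},u^{t-1}) π^c_t(u_t|s^t,u^{t-1})`. -/
def joint (K : Kernels X Y Z U) (πe : QPol T Z S U) (πc : CPol T S U) :
    Traj T X Y Z S U → ℝ :=
  fun (x, y, z, s, u) =>
    ∏ t : Fin T,
      K.PY (prevO y t) (y t) *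
      K.PX (prev3 x y u t) (x t) *
      K.PZ (x t) (z t) *
      πe t (histIncl z t) (hist s t) (hist u t) (s t) *
      πc t (histIncl s t) (hist u t) (u t)

/-! Adjoining to one argument of a mutual information a variable drawn by a kernel from that very
argument leaves the mutual information unchanged. When the horizon grows by one step, `U_{T+1}` is
drawn by a kernel that sees only `(S^{T+1}, U^T)` and `Y_{T+1}` by one that sees only `Y^T`, so the
whole increase of `I(S^T, U^T; Y^T)` comes from adjoining `S_{T+1}`; by the chain rule it is
`I(S_{T+1}; Y^T | S^T, U^T)`. The term of the first step vanishes because `Y^0` is constant. -/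

section Information

variable {Ω Ω' Ω'' A A' B B' C : Type} [Fintype Ω]

theorem sum_pr_mul [Fintype A] (P : Ω → ℝ) (f : Ω → A) (φ : A → ℝ) :
    ∑ a, pr P (fun ω => f ω = a) * φ a = ∑ ω, P ω * φ (f ω) := by
  simp only [pr, Finset.sum_mul]
  rw [Finset.sum_comm]
  simp only [ite_mul, zero_mul, Finset.sum_ite_eq, Finset.mem_univ, if_true]

theorem pr_pos {P : Ω → ℝ} (hP : ∀ ω, 0 ≤ P ω) {E : Ω → Prop} {ω : Ω} (hω : 0 < P ω)
    (hE : E ω) : 0 < pr P E := by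
  refine Finset.sum_pos' (fun ω' _ => ?_) ⟨ω, Finset.mem_univ ω, by rwa [if_pos hE]⟩
  split_ifs
  exacts [hP ω', le_rfl]

theorem MI_eq_sum_log [Fintype A] [Fintype B] (P : Ω → ℝ) (f : Ω → A) (g : Ω → B) :
    MI P f g = ∑ ω, P ω *
      Real.log (pr P (fun x => f x = f ω ∧ g x = g ω) /
        (pr P (fun x => f x = f ω) * pr P (fun x => g x = g ω))) := by
  rw [← sum_pr_mul P (fun ω => (f ω, g ω)) (fun p => Real.log
    (pr P (fun x => f x = p.1 ∧ g x = p.2) /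
      (pr P (fun x => f x = p.1) * pr P (fun x => g x = p.2)))), Fintype.sum_prod_type]
  simp only [MI, Prod.mk.injEq]

theorem condMI_eq_sum_log [Fintype A] [Fintype B] [Fintype C] (P : Ω → ℝ) (f : Ω → A)
    (g : Ω → B) (h : Ω → C) :
    condMI P f g h = ∑ ω, P ω *
      Real.log (pr P (fun x => f x = f ω ∧ g x = g ω ∧ h x = h ω) * pr P (fun x => h x = h ω) /
        (pr P (fun x => f x = f ω ∧ h x = h ω) * pr P (fun x => g x = g ω ∧ h x = h ω))) := by
  have cancel_cond (p q r w : ℝ) : p / w / (q / w * (r / w)) = p * w / (q * r) := by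
    rcases eq_or_ne w 0 with rfl | hw
    · simp only [div_zero, mul_zero, zero_div]
    · field_simp
  rw [← sum_pr_mul P (fun ω => (f ω, g ω, h ω)) (fun p => Real.log
    (pr P (fun x => f x = p.1 ∧ g x = p.2.1 ∧ h x = p.2.2) * pr P (fun x => h x = p.2.2) /
      (pr P (fun x => f x = p.1 ∧ h x = p.2.2) * pr P (fun x => g x = p.2.1 ∧ h x = p.2.2))))]
  simp only [condMI, condPr, cancel_cond, Prod.mk.injEq, Fintype.sum_prod_type, and_assoc]

theorem MI_congr [Fintype A] [Fintype A'] [Fintype B] [Fintype B'] (P : Ω → ℝ)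
    {f : Ω → A} {f' : Ω → A'} {g : Ω → B} {g' : Ω → B'}
    (hf : ∀ ω ω', f ω = f ω' ↔ f' ω = f' ω') (hg : ∀ ω ω', g ω = g ω' ↔ g' ω = g' ω') :
    MI P f g = MI P f' g' := by
  simp only [MI_eq_sum_log, hf, hg]

theorem MI_comm [Fintype A] [Fintype B] (P : Ω → ℝ) (f : Ω → A) (g : Ω → B) :
    MI P f g = MI P g f := by
  simp only [MI_eq_sum_log, and_comm, mul_comm]

theorem condMI_eq_zero_of_subsingleton [Fintype A] [Fintype B] [Fintype C] [Subsingleton B]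
    (P : Ω → ℝ) (f : Ω → A) (g : Ω → B) (h : Ω → C) : condMI P f g h = 0 := by
  have log_div_self (x : ℝ) : Real.log (x / x) = 0 := by
    rcases eq_or_ne x 0 with rfl | hx
    · rw [div_zero, Real.log_zero]
    · rw [div_self hx, Real.log_one]
  have g_const (ω ω' : Ω) : g ω = g ω' ↔ True := iff_true_intro (Subsingleton.elim _ _)
  simp only [condMI_eq_sum_log, g_const, true_and, log_div_self, mul_zero, Finset.sum_const_zero]

theorem MI_prod_eq_add_condMI [Fintype A] [Fintype B] [Fintype C] {P : Ω → ℝ}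
    (hP : ∀ ω, 0 ≤ P ω) (f : Ω → A) (s : Ω → C) (g : Ω → B) :
    MI P (fun ω => (f ω, s ω)) g = MI P f g + condMI P s g f := by
  rw [MI_eq_sum_log, MI_eq_sum_log, condMI_eq_sum_log, ← Finset.sum_add_distrib]
  refine Finset.sum_congr rfl fun ω _ => ?_
  rcases (hP ω).eq_or_lt with hω | hω
  · simp only [← hω, zero_mul, add_zero]
  have pos {E : Ω → Prop} (hE : E ω) : pr P E ≠ 0 := (pr_pos hP hω hE).ne'
  have hfsg : pr P (fun x => s x = s ω ∧ g x = g ω ∧ f x = f ω) ≠ 0 := pos ⟨rfl, rfl, rfl⟩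
  have hfg : pr P (fun x => g x = g ω ∧ f x = f ω) ≠ 0 := pos ⟨rfl, rfl⟩
  have hfs : pr P (fun x => s x = s ω ∧ f x = f ω) ≠ 0 := pos ⟨rfl, rfl⟩
  have hf : pr P (fun x => f x = f ω) ≠ 0 := pos rfl
  have hg : pr P (fun x => g x = g ω) ≠ 0 := pos rfl
  have event_fsg : (fun x => (f x, s x) = (f ω, s ω) ∧ g x = g ω) =
      fun x => s x = s ω ∧ g x = g ω ∧ f x = f ω := by
    simp only [Prod.mk.injEq, and_assoc, and_comm, and_left_comm]
  have event_fs : (fun x => (f x, s x) = (f ω, s ω)) = fun x => s x = s ω ∧ f x = f ω := by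
    simp only [Prod.mk.injEq, and_comm]
  have event_fg : (fun x => f x = f ω ∧ g x = g ω) = fun x => g x = g ω ∧ f x = f ω := by
    simp only [and_comm]
  rw [event_fsg, event_fs, event_fg, ← mul_add, ← Real.log_mul (by positivity) (by positivity)]
  congr 2
  field_simp

/-- `P'` is the law of the random variable `π` under the weights `P`. -/
def HasLaw (P : Ω → ℝ) (π : Ω → Ω') (P' : Ω' → ℝ) : Prop :=
  ∀ ω', pr P (fun ω => π ω = ω') = P' ω'

namespace HasLaw

variable {P : Ω → ℝ} {π : Ω → Ω'} {P' : Ω' → ℝ}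

theorem of_equiv (e : Ω ≃ Ω') (he : ∀ ω, P ω = P' (e ω)) : HasLaw P e P' := by
  intro ω'
  simp only [pr, ← e.eq_symm_apply, Finset.sum_ite_eq', Finset.mem_univ, if_true, he,
    e.apply_symm_apply]

variable [Fintype Ω']

theorem sum_mul_comp (hπ : HasLaw P π P') (φ : Ω' → ℝ) :
    ∑ ω, P ω * φ (π ω) = ∑ ω', P' ω' * φ ω' := by
  simp only [← sum_pr_mul P π φ, hπ _]

theorem pr_comp (hπ : HasLaw P π P') (E : Ω' → Prop) :
    pr P (fun ω => E (π ω)) = pr P' E := by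
  simpa only [pr, mul_ite, mul_one, mul_zero] using hπ.sum_mul_comp fun ω' => if E ω' then 1 else 0

theorem comp {ρ : Ω' → Ω''} {P'' : Ω'' → ℝ} (hρ : HasLaw P' ρ P'') (hπ : HasLaw P π P') :
    HasLaw P (fun ω => ρ (π ω)) P'' :=
  fun ω'' => (hπ.pr_comp fun ω' => ρ ω' = ω'').trans (hρ ω'')

theorem MI_comp [Fintype A] [Fintype B] (hπ : HasLaw P π P') (f : Ω' → A) (g : Ω' → B) :
    MI P (fun ω => f (π ω)) (fun ω => g (π ω)) = MI P' f g := by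
  simp only [MI, ← hπ.pr_comp]

theorem condMI_comp [Fintype A] [Fintype B] [Fintype C] (hπ : HasLaw P π P') (f : Ω' → A)
    (g : Ω' → B) (h : Ω' → C) :
    condMI P (fun ω => f (π ω)) (fun ω => g (π ω)) (fun ω => h (π ω)) = condMI P' f g h := by
  simp only [condMI, condPr, ← hπ.pr_comp]

end HasLaw

/-- The weights on `Ω × A` obtained by drawing `ω` from `P` and then `a` from `κ ω`. -/
def compProd (P : Ω → ℝ) (κ : Ω → A → ℝ) : Ω × A → ℝ :=
  fun p => P p.1 * κ p.1 p.2

notation:70 P:70 " ⊗ₚ " κ:71 => compProd P κ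

theorem hasLaw_fst_compProd [Fintype A] (P : Ω → ℝ) {κ : Ω → A → ℝ}
    (hκ : ∀ ω, ∑ a, κ ω a = 1) : HasLaw (P ⊗ₚ κ) Prod.fst P := by
  intro ω
  simp only [pr, Fintype.sum_prod_type]
  rw [Finset.sum_eq_single ω (by simp +contextual) (by simp)]
  simp only [compProd, if_true, ← Finset.mul_sum, hκ, mul_one]

theorem pr_compProd_and_snd_eq [Fintype A] (P : Ω → ℝ) {κ : Ω → A → ℝ} {E : Ω → Prop} {a : A}
    {k : ℝ} (hk : ∀ ω, E ω → κ ω a = k) :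
    pr (P ⊗ₚ κ) (fun p => E p.1 ∧ p.2 = a) = k * pr P E := by
  simp only [pr, compProd, Fintype.sum_prod_type, Finset.mul_sum, ite_and]
  refine Finset.sum_congr rfl fun ω _ => ?_
  by_cases hE : E ω
  · simp only [hE, if_true, Finset.sum_ite_eq', Finset.mem_univ, hk ω hE, mul_comm]
  · simp only [hE, if_false, Finset.sum_const_zero, mul_zero]

theorem MI_compProd_prod_left [Fintype A] [Fintype B] [Fintype C] (P : Ω → ℝ) (f : Ω → A)
    (g : Ω → B) {κ : A → C → ℝ} (hκ : ∀ a, ∑ c, κ a c = 1) :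
    MI (P ⊗ₚ fun ω => κ (f ω)) (fun p => (f p.1, p.2)) (fun p => g p.1) = MI P f g := by
  have law := hasLaw_fst_compProd P fun ω => hκ (f ω)
  rw [← law.MI_comp f g, MI_eq_sum_log, MI_eq_sum_log]
  refine Finset.sum_congr rfl fun ⟨ω, c⟩ _ => ?_
  rcases eq_or_ne (κ (f ω) c) 0 with h0 | h0
  · simp only [compProd, h0, mul_zero, zero_mul]
  have pr_joint : pr (P ⊗ₚ fun ω => κ (f ω)) (fun p => (f p.1, p.2) = (f ω, c) ∧ g p.1 = g ω) =
      κ (f ω) c * pr P (fun x => f x = f ω ∧ g x = g ω) := by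
    rw [← pr_compProd_and_snd_eq P (κ := fun ω => κ (f ω)) fun x hx => by rw [hx.1]]
    simp only [Prod.mk.injEq, and_right_comm]
  have pr_left : pr (P ⊗ₚ fun ω => κ (f ω)) (fun p => (f p.1, p.2) = (f ω, c)) =
      κ (f ω) c * pr P (fun x => f x = f ω) := by
    rw [← pr_compProd_and_snd_eq P (κ := fun ω => κ (f ω)) fun x hx => by rw [hx]]
    simp only [Prod.mk.injEq]
  rw [pr_joint, pr_left, law.pr_comp fun x => f x = f ω ∧ g x = g ω,
    law.pr_comp fun x => f x = f ω, mul_assoc, mul_div_mul_left _ _ h0]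

theorem MI_compProd_prod_right [Fintype A] [Fintype B] [Fintype C] (P : Ω → ℝ) (f : Ω → A)
    (g : Ω → B) {κ : B → C → ℝ} (hκ : ∀ b, ∑ c, κ b c = 1) :
    MI (P ⊗ₚ fun ω => κ (g ω)) (fun p => f p.1) (fun p => (g p.1, p.2)) = MI P f g := by
  rw [MI_comm, MI_compProd_prod_left P g f hκ, MI_comm]

theorem MI_compProd_compProd [Fintype A] [Fintype A'] [Fintype B] [Fintype B'] [Fintype C]
    {P : Ω → ℝ} (hP : ∀ ω, 0 ≤ P ω) (f : Ω → A) (s : Ω → C) (g : Ω → B) {κ : A × C → A' → ℝ}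
    (hκ : ∀ p, ∑ a, κ p a = 1) {η : B → B' → ℝ} (hη : ∀ b, ∑ b', η b b' = 1) :
    MI (P ⊗ₚ (fun ω => κ (f ω, s ω)) ⊗ₚ (fun p => η (g p.1)))
        (fun p => ((f p.1.1, s p.1.1), p.1.2)) (fun p => (g p.1.1, p.2)) =
      MI P f g + condMI P s g f := by
  rw [← MI_prod_eq_add_condMI hP f s g, ← MI_compProd_prod_left P (fun ω => (f ω, s ω)) g hκ]
  exact MI_compProd_prod_right (P ⊗ₚ fun ω => κ (f ω, s ω)) (fun p => ((f p.1, s p.1), p.2))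
    (fun p => g p.1) hη

end Information

section LastStep

/-- The final value of a tuple, or `none` for the empty tuple: what a kernel sees when it draws
the entry that follows the tuple. -/
def lastO {A : Type} (f : Fin T → A) : Option A :=
  if h : T = 0 then none else some (f ⟨T - 1, Nat.sub_one_lt h⟩)

theorem prevO_last {A : Type} (f : Fin (T + 1) → A) :
    prevO f (Fin.last T) = lastO (Fin.init f) := by
  unfold prevO lastO
  split_ifs <;> first | rfl | contradiction

theorem eq_iff_init_eq_and_last_eq {A : Type} (f g : Fin (T + 1) → A) :
    f = g ↔ Fin.init f = Fin.init g ∧ f (Fin.last T) = g (Fin.last T) := by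
  rw [← Fin.snoc_inj (α := fun _ => A), Fin.snoc_init_self, Fin.snoc_init_self]

/-- A trajectory over `T + 1` steps as its first `T` steps followed by the values of the final step
in the order `x, z, s, u, y`. The input `y` may come last because nothing within its own time
step depends on it. -/
def splitLast : Traj (T + 1) X Y Z S U ≃ ((((Traj T X Y Z S U × X) × Z) × S) × U) × Y where
  toFun := fun (x, y, z, s, u) =>
    ((((((Fin.init x, Fin.init y, Fin.init z, Fin.init s, Fin.init u),
      x (Fin.last T)), z (Fin.last T)), s (Fin.last T)), u (Fin.last T)), y (Fin.last T))
  invFun := fun (((((ω, x), z), s), u), y) =>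
    (Fin.snoc (trX ω) x, Fin.snoc (trY ω) y, Fin.snoc (trZ ω) z, Fin.snoc (trS ω) s,
      Fin.snoc (trU ω) u)
  left_inv ω := by simp [trX, trY, trZ, trS, trU]
  right_inv p := by simp [trX, trY, trZ, trS, trU]

/-- The quantizer policy of the first `T` steps. -/
def QPol.init (πe : QPol (T + 1) Z S U) : QPol T Z S U := fun t => πe t.castSucc

/-- The controller policy of the first `T` steps. -/
def CPol.init (πc : CPol (T + 1) S U) : CPol T S U := fun t => πc t.castSucc

theorem IsQPol.init {Z S U : Type} [Fintype S] {πe : QPol (T + 1) Z S U} (hπe : IsQPol πe) :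
    IsQPol πe.init :=
  ⟨fun t => hπe.1 t.castSucc, fun t => hπe.2 t.castSucc⟩

theorem IsCPol.init {S U : Type} [Fintype U] {πc : CPol (T + 1) S U} (hπc : IsCPol πc) :
    IsCPol πc.init :=
  ⟨fun t => hπc.1 t.castSucc, fun t => hπc.2 t.castSucc⟩

/-- The law of the first `T` steps together with the state, the measurement and the quantizer
output of step `T + 1`. -/
def quantizedLaw (K : Kernels X Y Z U) (πe : QPol (T + 1) Z S U) (πc : CPol (T + 1) S U) :
    ((Traj T X Y Z S U × X) × Z) × S → ℝ :=
  joint K πe.init πc.init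
    ⊗ₚ (fun ω => K.PX (lastO fun i => (trX ω i, trY ω i, trU ω i)))
    ⊗ₚ (fun p => K.PZ p.2)
    ⊗ₚ (fun ((ω, _), z) => πe (Fin.last T) (Fin.snoc (trZ ω) z) (trS ω) (trU ω))

theorem joint_eq_compProd_splitLast {S : Type} (K : Kernels X Y Z U) (πe : QPol (T + 1) Z S U)
    (πc : CPol (T + 1) S U) (ω : Traj (T + 1) X Y Z S U) :
    joint K πe πc ω =
      (quantizedLaw K πe πc
        ⊗ₚ (fun p => πc (Fin.last T) (Fin.snoc (trS p.1.1.1) p.2) (trU p.1.1.1))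
        ⊗ₚ (fun p => K.PY (lastO (trY p.1.1.1.1)))) (splitLast ω) := by
  obtain ⟨x, y, z, s, u⟩ := ω
  have prev3_last : prev3 x y u (Fin.last T) =
      lastO fun i => (Fin.init x i, Fin.init y i, Fin.init u i) :=
    prevO_last fun i => (x i, y i, u i)
  have snoc_init_last {A : Type} (f : Fin (T + 1) → A) :
      Fin.snoc (Fin.init f) (f (Fin.last T)) = histIncl f (Fin.last T) := Fin.snoc_init_self f
  calc
    _ = joint K πe.init πc.init (Fin.init x, Fin.init y, Fin.init z, Fin.init s, Fin.init u) *
          (K.PY (prevO y (Fin.last T)) (y (Fin.last T)) *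
            K.PX (prev3 x y u (Fin.last T)) (x (Fin.last T)) *
            K.PZ (x (Fin.last T)) (z (Fin.last T)) *
            πe (Fin.last T) (histIncl z (Fin.last T)) (Fin.init s) (Fin.init u) (s (Fin.last T)) *
            πc (Fin.last T) (histIncl s (Fin.last T)) (Fin.init u) (u (Fin.last T))) :=
      Fin.prod_univ_castSucc _
    _ = _ := by
      simp only [prevO_last, prev3_last, ← snoc_init_last, compProd, quantizedLaw, splitLast,
        Equiv.coe_fn_mk, trX, trY, trZ, trS, trU]
      ring

theorem joint_nonneg (K : Kernels X Y Z U) {πe : QPol T Z S U} {πc : CPol T S U}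
    (hπe : IsQPol πe) (hπc : IsCPol πc) (ω : Traj T X Y Z S U) : 0 ≤ joint K πe πc ω :=
  Finset.prod_nonneg fun _ _ =>
    mul_nonneg (mul_nonneg (mul_nonneg (mul_nonneg (K.PY_nonneg _ _) (K.PX_nonneg _ _))
      (K.PZ_nonneg _ _)) (hπe.1 _ _ _ _ _)) (hπc.1 _ _ _ _)

theorem quantizedLaw_nonneg (K : Kernels X Y Z U) {πe : QPol (T + 1) Z S U}
    {πc : CPol (T + 1) S U} (hπe : IsQPol πe) (hπc : IsCPol πc)
    (p : ((Traj T X Y Z S U × X) × Z) × S) : 0 ≤ quantizedLaw K πe πc p :=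
  mul_nonneg (mul_nonneg (mul_nonneg (joint_nonneg K hπe.init hπc.init _) (K.PX_nonneg _ _))
    (K.PZ_nonneg _ _)) (hπe.1 _ _ _ _ _)

theorem hasLaw_quantizedLaw (K : Kernels X Y Z U) (πe : QPol (T + 1) Z S U)
    {πc : CPol (T + 1) S U} (hπc : IsCPol πc) :
    HasLaw (joint K πe πc) (fun ω => (splitLast ω).1.1) (quantizedLaw K πe πc) :=
  (hasLaw_fst_compProd _ fun _ => hπc.2 _ _ _).comp <|
    (hasLaw_fst_compProd _ fun _ => K.PY_sum _).comp <|
      HasLaw.of_equiv splitLast (joint_eq_compProd_splitLast K πe πc)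

theorem hasLaw_joint_init (K : Kernels X Y Z U) {πe : QPol (T + 1) Z S U}
    (hπe : IsQPol πe) (πc : CPol (T + 1) S U) :
    HasLaw (quantizedLaw K πe πc) (fun p => p.1.1.1) (joint K πe.init πc.init) :=
  (hasLaw_fst_compProd _ fun _ => K.PX_sum _).comp <|
    (hasLaw_fst_compProd _ fun _ => K.PZ_sum _).comp <|
      hasLaw_fst_compProd _ fun _ => hπe.2 _ _ _ _

theorem MI_joint_succ (K : Kernels X Y Z U) {πe : QPol (T + 1) Z S U} {πc : CPol (T + 1) S U}
    (hπe : IsQPol πe) (hπc : IsCPol πc) :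
    MI (joint K πe πc) (fun ω => (trS ω, trU ω)) trY =
      MI (joint K πe.init πc.init) (fun ω => (trS ω, trU ω)) trY +
        condMI (joint K πe πc) (fun ω => trS ω (Fin.last T))
          (fun ω => hist (trY ω) (Fin.last T))
          (fun ω => (hist (trS ω) (Fin.last T), hist (trU ω) (Fin.last T))) := by
  let pastSU (p : ((Traj T X Y Z S U × X) × Z) × S) := (trS p.1.1.1, trU p.1.1.1)
  let pastY (p : ((Traj T X Y Z S U × X) × Z) × S) := trY p.1.1.1
  let controller (c : ((Fin T → S) × (Fin T → U)) × S) := πc (Fin.last T) (Fin.snoc c.1.1 c.2) c.1.2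
  calc
    MI (joint K πe πc) (fun ω => (trS ω, trU ω)) trY
    _ = MI (joint K πe πc)
          (fun ω => ((pastSU (splitLast ω).1.1, (splitLast ω).1.1.2), (splitLast ω).1.2))
          (fun ω => (pastY (splitLast ω).1.1, (splitLast ω).2)) := by
      refine MI_congr _ (fun ω ω' => ?_) (fun ω ω' => ?_)
      · simp only [Prod.mk.injEq, eq_iff_init_eq_and_last_eq (trS ω),
          eq_iff_init_eq_and_last_eq (trU ω), pastSU]
        exact and_and_and_comm.trans and_assoc.symm
      · simp only [Prod.mk.injEq, eq_iff_init_eq_and_last_eq (trY ω), pastY]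
        rfl
    _ = MI (quantizedLaw K πe πc ⊗ₚ (fun p => controller (pastSU p, p.2))
            ⊗ₚ (fun p => K.PY (lastO (pastY p.1))))
          (fun p => ((pastSU p.1.1, p.1.1.2), p.1.2)) (fun p => (pastY p.1.1, p.2)) :=
      (HasLaw.of_equiv splitLast (joint_eq_compProd_splitLast K πe πc)).MI_comp
        (fun p => ((pastSU p.1.1, p.1.1.2), p.1.2)) (fun p => (pastY p.1.1, p.2))
    _ = MI (quantizedLaw K πe πc) pastSU pastY +
          condMI (quantizedLaw K πe πc) Prod.snd pastY pastSU :=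
      MI_compProd_compProd (quantizedLaw_nonneg K hπe hπc) pastSU Prod.snd pastY
        (κ := controller) (fun _ => hπc.2 _ _ _) (η := fun b => K.PY (lastO b)) fun _ => K.PY_sum _
    _ = _ := by
      rw [← (hasLaw_joint_init K hπe πc).MI_comp (fun ω => (trS ω, trU ω)) trY,
        ← (hasLaw_quantizedLaw K πe hπc).condMI_comp Prod.snd pastY pastSU]
      rfl

theorem MI_joint_eq_sum_condMI (K : Kernels X Y Z U) {πe : QPol T Z S U} {πc : CPol T S U}
    (hπe : IsQPol πe) (hπc : IsCPol πc) :
    MI (joint K πe πc) (fun ω => (trS ω, trU ω)) trY =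
      ∑ t, condMI (joint K πe πc) (fun ω => trS ω t) (fun ω => hist (trY ω) t)
        (fun ω => (hist (trS ω) t, hist (trU ω) t)) := by
  induction T with
  | zero =>
    simp [MI_eq_sum_log, pr, joint, eq_iff_true_of_subsingleton]
  | succ T ih =>
    rw [MI_joint_succ K hπe hπc, ih hπe.init hπc.init, Fin.sum_univ_castSucc]
    refine congrArg (· + _) (Finset.sum_congr rfl fun t _ => ?_)
    exact (((hasLaw_joint_init K hπe πc).comp (hasLaw_quantizedLaw K πe hπc)).condMI_comp
      (fun ω => trS ω t) (fun ω => hist (trY ω) t)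
      (fun ω => (hist (trS ω) t, hist (trU ω) t))).symm

end LastStep

/-- Chain-rule decomposition of the privacy leakage:
`I(S^T, U^T; Y^T) = ∑_{t=2}^T I(S_t ; Y^{t-1} | S^{t-1}, U^{t-1})`
(the sum below ranges over the 0-indexed times `t` with `t.1 ≠ 0`, i.e. over
the paper's times `t = 2, …, T`). -/
theorem mutual_information_decomposition
    [Nonempty X] [Nonempty Y] [Nonempty Z] [Nonempty S] [Nonempty U]
    (hT : 1 ≤ T) (K : Kernels X Y Z U)
    (πe : QPol T Z S U) (πc : CPol T S U) (hπe : IsQPol πe) (hπc : IsCPol πc) :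
    MI (joint K πe πc) (fun ω => (trS ω, trU ω)) (fun ω => trY ω) =
      ∑ t ∈ Finset.univ.filter (fun t : Fin T => t.1 ≠ 0),
        condMI (joint K πe πc)
          (fun ω => trS ω t)
          (fun ω => hist (trY ω) t)
          (fun ω => (hist (trS ω) t, hist (trU ω) t)) := by
  rw [MI_joint_eq_sum_condMI K hπe hπc, Finset.sum_filter_of_ne]
  rintro t - ht h0
  have : IsEmpty (Fin t.1) := by rw [h0]; exact Fin.isEmpty'
  exact ht (condMI_eq_zero_of_subsingleton _ _ _ _)

end NCS
end
end

section
/- Consider the networked control causal factorization over a horizon T with finite alphabets. Then for every t ∈ {1,…,T−1}, every (s^t, u^t) with P(S^t = s^t, U^t = u^t) > 0, and all x_{t+1} ∈ 𝕏, y^t ∈ 𝕐^t, z^{t+1} ∈ ℤ^{t+1}: P(X_{t+1} = x_{t+1}, Y^t = y^t, Z^{t+1} = z^{t+1} | S^t = s^t, U^t = u^t) = Σ_{x_t ∈ 𝕏} P_Z(z_{t+1} | x_{t+1}) · P_X(x_{t+1} | x_t, y_t, u_t) · P_Y(y_t | y_{t-1}) · P(X_t = x_t, Y^{t-1} = y^{t-1},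 Z^t = z^t | S^t = s^t, U^{t-1} = u^{t-1}), where for t = 1 the conditioning of P_Y on y_0 is vacuous. -/
open scoped BigOperators Classical

noncomputable section

namespace NCS

/-! ### The networked control causal factorization -/

variable {T : ℕ} {X Y Z S U : Type}

variable [Fintype X] [Fintype Y] [Fintype Z] [Fintype S] [Fintype U]

/-! Read block by block, with blocks `(x_t, y_t, z_t, s_t, u_t)`, the joint pmf is a product of
causal conditional pmfs. By the tower property, the probability of an event about the past of `t`
together with an event about the block at `t` is an average of conditional block probabilities.
Consequently, appending `u_t` to the observed policy history, and `y_t, u_t` to the joint event,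
multiplies the probability by `π^c_t(u_t | s^t, u^{t-1})`, respectively by `P_Y(y_t | y_{t-1}) ·
π^c_t(u_t | s^t, u^{t-1})`; appending `x_{t+1}, z_{t+1}` multiplies it by `P_X(x_{t+1} | x_t, y_t,
u_t) · P_Z(z_{t+1} | x_{t+1})`. The controller factor is common to the numerator and the
denominator of the conditional probability, is nonzero because `(s^t, u^t)` has positive
probability, and cancels. -/

section CausalProduct

variable {ι : Type*} {α : ι → Type*}

theorem sum_sum_update {M : Type*} [AddCommMonoid M] [Fintype ι] [DecidableEq ι]
    [∀ i, Fintype (α i)] (i : ι) (F : (∀ j, α j) → M) :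
    ∑ ω, ∑ a, F (Function.update ω i a) = Fintype.card (α i) • ∑ ω, F ω := by
  let swap : (∀ j, α j) × α i → (∀ j, α j) × α i := fun p => (Function.update p.1 i p.2, p.1 i)
  have swap_involutive : Function.Involutive swap := fun p => by simp [swap]
  calc ∑ ω, ∑ a, F (Function.update ω i a)
      = ∑ p : (∀ j, α j) × α i, F (swap p).1 := (Fintype.sum_prod_type fun p => F (swap p).1).symm
    _ = ∑ p : (∀ j, α j) × α i, F p.1 := swap_involutive.bijective.sum_comp fun p => F p.1
    _ = Fintype.card (α i) • ∑ ω, F ω := by simp [Fintype.sum_prod_type, Finset.sum_nsmul]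

/-- The joint pmf `∏ᵢ P(ωᵢ | ω₁, …, ωᵢ₋₁)` built from a family of conditional pmfs. -/
def causalProd [Fintype ι] (κ : ∀ i, (∀ j, α j) → α i → ℝ) (ω : ∀ j, α j) : ℝ :=
  ∏ i, κ i ω (ω i)

variable [LinearOrder ι] [∀ i, Fintype (α i)]

/-- `κ i ω` is the conditional pmf of the `i`-th coordinate given the strict past. It takes the
whole point `ω` as argument, which avoids restriction maps; causality says that only the
coordinates of `ω` before `i` matter. -/
structure IsCausalKernel (κ : ∀ i, (∀ j, α j) → α i → ℝ) : Prop where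
  dependsOn : ∀ i, DependsOn (κ i) (Set.Iio i)
  sum_eq_one : ∀ i ω, ∑ a, κ i ω a = 1

/-- The conditional expectation of `f` given the strict past of `i`, for `f` a function of the
coordinates up to `i`: the `i`-th coordinate is averaged against `κ i`. -/
def condMean (κ : ∀ i, (∀ j, α j) → α i → ℝ) (i : ι) (f : (∀ j, α j) → ℝ) (ω : ∀ j, α j) : ℝ :=
  ∑ a, κ i ω a * f (Function.update ω i a)

namespace IsCausalKernel

variable {κ : ∀ i, (∀ j, α j) → α i → ℝ}

theorem apply_update_of_le (hκ : IsCausalKernel κ) {i j : ι} (hij : i ≤ j) (ω : ∀ j, α j)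
    (a : α j) : κ i (Function.update ω j a) = κ i ω :=
  hκ.dependsOn i fun _ hk => Function.update_of_ne (hk.trans_le hij).ne _ _

theorem condMean_eq_self (hκ : IsCausalKernel κ) {i : ι} {f : (∀ j, α j) → ℝ}
    (hf : DependsOn f {i}ᶜ) : condMean κ i f = f := by
  funext ω
  have hf_update (a : α i) : f (Function.update ω i a) = f ω :=
    hf fun _ hj => Function.update_of_ne hj _ _
  simp only [condMean, hf_update, ← Finset.sum_mul, hκ.sum_eq_one, one_mul]

theorem dependsOn_condMean (hκ : IsCausalKernel κ) {i : ι} {f : (∀ j, α j) → ℝ}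
    (hf : DependsOn f (Set.Iic i)) : DependsOn (condMean κ i f) (Set.Iio i) := by
  intro ω ω' h
  have hf_update (a : α i) : f (Function.update ω i a) = f (Function.update ω' i a) := by
    refine hf fun j (hj : j ≤ i) => ?_
    rcases hj.eq_or_lt with rfl | hj
    · simp
    · simp [hj.ne, h j hj]
  simp only [condMean, hκ.dependsOn i h, hf_update]

variable [Fintype ι]

theorem card_mul_sum_prod_insert_mul (hκ : IsCausalKernel κ) {s : Finset ι} {i : ι}
    (hs : ∀ j ∈ s, j < i) (f : (∀ j, α j) → ℝ) :
    Fintype.card (α i) * ∑ ω, (∏ j ∈ insert i s, κ j ω (ω j)) * f ω =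
      ∑ ω, (∏ j ∈ s, κ j ω (ω j)) * condMean κ i f ω := by
  rw [← nsmul_eq_mul, ← sum_sum_update i]
  refine Finset.sum_congr rfl fun ω _ => ?_
  rw [condMean, Finset.mul_sum]
  refine Finset.sum_congr rfl fun a _ => ?_
  have prod_update : ∏ j ∈ s, κ j (Function.update ω i a) (Function.update ω i a j) =
      ∏ j ∈ s, κ j ω (ω j) := Finset.prod_congr rfl fun j hj => by
    rw [hκ.apply_update_of_le (hs j hj).le, Function.update_of_ne (hs j hj).ne]
  rw [Finset.prod_insert fun hi => (hs i hi).false, prod_update, hκ.apply_update_of_le le_rfl,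
    Function.update_self]
  ring

/-- Tower property. The later coordinates are integrated out one at a time, the latest first. -/
theorem sum_prod_mul_condMean (hκ : IsCausalKernel κ) {i : ι} {f : (∀ j, α j) → ℝ}
    (hf : DependsOn f (Set.Iic i)) {s : Finset ι} (hi : i ∈ s) :
    ∑ ω, (∏ j ∈ s, κ j ω (ω j)) * condMean κ i f ω = ∑ ω, (∏ j ∈ s, κ j ω (ω j)) * f ω := by
  rcases isEmpty_or_nonempty (∀ j, α j) with _ | ⟨⟨ω₀⟩⟩
  · simp
  induction s using Finset.induction_on_max with
  | empty => simp at hi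
  | insert k s hk ih =>
    have card_ne_zero : (Fintype.card (α k) : ℝ) ≠ 0 := by
      have : Nonempty (α k) := ⟨ω₀ k⟩
      exact_mod_cast Fintype.card_ne_zero
    have hg : DependsOn (condMean κ i f) (Set.Iio i) := hκ.dependsOn_condMean hf
    refine mul_left_cancel₀ card_ne_zero ?_
    rw [hκ.card_mul_sum_prod_insert_mul hk, hκ.card_mul_sum_prod_insert_mul hk]
    rcases Finset.mem_insert.mp hi with rfl | his
    · rw [hκ.condMean_eq_self (hg.mono fun _ hj => hj.ne)]
    · have hik : i < k := hk i his
      rw [hκ.condMean_eq_self (hf.mono fun _ hj => (hj.trans_lt hik).ne),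
        hκ.condMean_eq_self (hg.mono fun _ hj => (hj.trans hik).ne), ih his]

end IsCausalKernel

end CausalProduct

section Probability

namespace IsCausalKernel

variable {ι : Type} {α : ι → Type} [LinearOrder ι] [Fintype ι] [∀ i, Fintype (α i)]
  {κ : ∀ i, (∀ j, α j) → α i → ℝ}

theorem pr_causalProd_and (hκ : IsCausalKernel κ) {i : ι} {A : (∀ j, α j) → Prop}
    (hA : DependsOn A (Set.Iio i)) (B : α i → Prop) :
    pr (causalProd κ) (fun ω => A ω ∧ B (ω i)) =
      ∑ ω, causalProd κ ω * if A ω then pr (κ i ω) B else 0 := by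
  set f : (∀ j, α j) → ℝ := fun ω => if A ω ∧ B (ω i) then 1 else 0 with hf_def
  have hf : DependsOn f (Set.Iic i) := fun ω ω' h => by
    simp only [hf_def, hA fun j hj => h j (le_of_lt hj), h i le_rfl]
  have condMean_f (ω) : condMean κ i f ω = if A ω then pr (κ i ω) B else 0 := by
    have hA_update (a : α i) : A (Function.update ω i a) = A ω :=
      hA fun _ hj => Function.update_of_ne hj.ne _ _
    by_cases hω : A ω <;> simp [condMean, f, pr, hA_update, hω]
  calc pr (causalProd κ) (fun ω => A ω ∧ B (ω i))
      = ∑ ω, causalProd κ ω * f ω := by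
        simp only [pr, f, mul_ite, mul_one, mul_zero]
        congr!
    _ = ∑ ω, causalProd κ ω * condMean κ i f ω :=
        (hκ.sum_prod_mul_condMean hf (Finset.mem_univ i)).symm
    _ = _ := by simp only [condMean_f]

theorem pr_causalProd_and_eq_mul (hκ : IsCausalKernel κ) {i : ι} {A : (∀ j, α j) → Prop}
    (hA : DependsOn A (Set.Iio i)) {B C : α i → Prop} {q : ℝ}
    (h : ∀ ω, A ω → pr (κ i ω) B = q * pr (κ i ω) C) :
    pr (causalProd κ) (fun ω => A ω ∧ B (ω i)) =
      q * pr (causalProd κ) (fun ω => A ω ∧ C (ω i)) := by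
  rw [hκ.pr_causalProd_and hA, hκ.pr_causalProd_and hA, Finset.mul_sum]
  refine Finset.sum_congr rfl fun ω _ => ?_
  split_ifs with hω
  · rw [h ω hω]
    ring
  · simp

end IsCausalKernel


variable {Ω : Type} [Fintype Ω]

theorem pr_eq_sum_pr_and_eq {A : Type} [Fintype A] (P : Ω → ℝ) (E : Ω → Prop) (f : Ω → A) :
    pr P E = ∑ a, pr P (fun ω => E ω ∧ f ω = a) := by
  unfold pr
  rw [Finset.sum_comm]
  refine Finset.sum_congr rfl fun ω _ => ?_
  by_cases hω : E ω <;> simp [hω]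

theorem pr_comp_equiv {Ω' : Type} [Fintype Ω'] (e : Ω' ≃ Ω) (P : Ω → ℝ) (E : Ω → Prop) :
    pr (P ∘ e) (E ∘ e) = pr P E :=
  e.sum_comp fun ω => if E ω then P ω else 0

end Probability

section BlockPMF

/-- The law of one time block `(x, y, z, s, u)` given the past: `y` is independent of the chain
`x → z → s → u`. -/
def blockPMF {X Y Z S U : Type} (pX : X → ℝ) (pY : Y → ℝ) (pZ : X → Z → ℝ) (pS : Z → S → ℝ)
    (pU : S → U → ℝ) : X × Y × Z × S × U → ℝ :=
  fun (x, y, z, s, u) => pY y * pX x * pZ x z * pS z s * pU s u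

variable {pX : X → ℝ} {pY : Y → ℝ} {pZ : X → Z → ℝ} {pS : Z → S → ℝ} {pU : S → U → ℝ}

theorem sum_blockPMF (hX : ∑ x, pX x = 1) (hY : ∑ y, pY y = 1) (hZ : ∀ x, ∑ z, pZ x z = 1)
    (hS : ∀ z, ∑ s, pS z s = 1) (hU : ∀ s, ∑ u, pU s u = 1) :
    ∑ b, blockPMF pX pY pZ pS pU b = 1 := by
  simp [blockPMF, Fintype.sum_prod_type, ← Finset.mul_sum, ← Finset.sum_mul, hX, hY, hZ, hS, hU]

theorem pr_blockPMF_x_z (hY : ∑ y, pY y = 1) (hS : ∀ z, ∑ s, pS z s = 1)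
    (hU : ∀ s, ∑ u, pU s u = 1) (x₀ : X) (z₀ : Z) :
    pr (blockPMF pX pY pZ pS pU) (fun (x, _, z, _, _) => x = x₀ ∧ z = z₀) =
      pX x₀ * pZ x₀ z₀ := by
  simp [pr, blockPMF, Fintype.sum_prod_type, ite_and, ← Finset.mul_sum, ← Finset.sum_mul, hY, hS,
    hU]

theorem pr_blockPMF_s_u (hU : ∀ s, ∑ u, pU s u = 1) (s₀ : S) (u₀ : U) :
    pr (blockPMF pX pY pZ pS pU) (fun (_, _, _, s, u) => s = s₀ ∧ u = u₀) =
      pU s₀ u₀ * pr (blockPMF pX pY pZ pS pU) (fun (_, _, _, s, _) => s = s₀) := by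
  simp [pr, blockPMF, Fintype.sum_prod_type, ite_and, ← Finset.mul_sum, ← Finset.sum_mul, hU,
    mul_comm (pU _ _)]

theorem pr_blockPMF_eq (hY : ∑ y, pY y = 1) (hU : ∀ s, ∑ u, pU s u = 1)
    (x₀ : X) (y₀ : Y) (z₀ : Z) (s₀ : S) (u₀ : U) :
    pr (blockPMF pX pY pZ pS pU)
        (fun (x, y, z, s, u) => x = x₀ ∧ y = y₀ ∧ z = z₀ ∧ s = s₀ ∧ u = u₀) =
      pY y₀ * pU s₀ u₀ *
        pr (blockPMF pX pY pZ pS pU) (fun (x, _, z, s, _) => x = x₀ ∧ z = z₀ ∧ s = s₀) := by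
  simp [pr, blockPMF, Fintype.sum_prod_type, ite_and, ← Finset.mul_sum, ← Finset.sum_mul, hY, hU]
  ring

end BlockPMF

section Histories

variable {A : Type}

theorem hist_congr {f g : Fin T → A} {t : Fin T} (h : Set.EqOn f g (Set.Iio t)) :
    hist f t = hist g t :=
  funext fun i => h (Fin.lt_def.mpr i.2)

theorem histIncl_congr {f g : Fin T → A} {t : Fin T} (h : Set.EqOn f g (Set.Iic t)) :
    histIncl f t = histIncl g t :=
  funext fun i => h (Fin.le_def.mpr (Nat.lt_succ_iff.mp i.2))

theorem histIncl_eq_snoc (f : Fin T → A) (t : Fin T) :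
    histIncl f t = Fin.snoc (α := fun _ => A) (hist f t) (f t) :=
  (Fin.snoc_init_self (histIncl f t)).symm

theorem snoc_trunc_last {n : ℕ} (g : Fin (n + 1) → A) :
    Fin.snoc (α := fun _ => A) (trunc g) (g (Fin.last n)) = g :=
  Fin.snoc_init_self g

theorem histIncl_eq_iff {t : Fin T} {f : Fin T → A} {g : Fin (t.1 + 1) → A} :
    histIncl f t = g ↔ hist f t = trunc g ∧ f t = g (Fin.last t.1) := by
  rw [histIncl_eq_snoc, ← snoc_trunc_last g, Fin.snoc_inj, snoc_trunc_last]

theorem histIncl_succ_eq_iff {t : Fin T} (ht : t.1 + 1 < T) {f : Fin T → A}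
    {g : Fin (t.1 + 1 + 1) → A} :
    histIncl f ⟨t.1 + 1, ht⟩ = g ↔
      histIncl f t = trunc g ∧ f ⟨t.1 + 1, ht⟩ = g (Fin.last (t.1 + 1)) :=
  histIncl_eq_iff (t := ⟨t.1 + 1, ht⟩)

theorem prevO_eq_of_hist_eq {f : Fin T → A} {t : Fin T} {g : Fin t.1 → A} (h : hist f t = g) :
    prevO f t = if ht : t.1 = 0 then none else some (g ⟨t.1 - 1, by omega⟩) := by
  subst h
  rfl

theorem prevO_congr {f g : Fin T → A} {t : Fin T} (h : Set.EqOn f g (Set.Iio t)) :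
    prevO f t = prevO g t := by
  rw [prevO_eq_of_hist_eq rfl, prevO_eq_of_hist_eq rfl, hist_congr h]

omit [Fintype X] [Fintype Y] [Fintype U] in
theorem prev3_congr {x x' : Fin T → X} {y y' : Fin T → Y} {u u' : Fin T → U} {t : Fin T}
    (hx : Set.EqOn x x' (Set.Iio t)) (hy : Set.EqOn y y' (Set.Iio t))
    (hu : Set.EqOn u u' (Set.Iio t)) : prev3 x y u t = prev3 x' y' u' t := by
  unfold prev3
  split_ifs with ht
  · rfl
  · rw [hx, hy, hu] <;> simp [Fin.lt_def] <;> omega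

omit [Fintype X] [Fintype Y] [Fintype U] in
theorem prev3_succ (x : Fin T → X) (y : Fin T → Y) (u : Fin T → U) {t : Fin T}
    (ht : t.1 + 1 < T) : prev3 x y u ⟨t.1 + 1, ht⟩ = some (x t, y t, u t) :=
  rfl

end Histories

section StepPMF

/-- A sequence of time blocks `(x_t, y_t, z_t, s_t, u_t)` regarded as a trajectory; block by block,
`joint` becomes a `causalProd`. -/
def trajOfBlocks : (Fin T → X × Y × Z × S × U) ≃ Traj T X Y Z S U where
  toFun w := (fun t => (w t).1, fun t => (w t).2.1, fun t => (w t).2.2.1,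
    fun t => (w t).2.2.2.1, fun t => (w t).2.2.2.2)
  invFun ω t := (trX ω t, trY ω t, trZ ω t, trS ω t, trU ω t)

omit [Fintype X] [Fintype Y] [Fintype Z] [Fintype S] [Fintype U] in
theorem eqOn_trajOfBlocks {w w' : Fin T → X × Y × Z × S × U} {s : Set (Fin T)}
    (h : Set.EqOn w w' s) :
    Set.EqOn (trX (trajOfBlocks w)) (trX (trajOfBlocks w')) s ∧
      Set.EqOn (trY (trajOfBlocks w)) (trY (trajOfBlocks w')) s ∧
      Set.EqOn (trZ (trajOfBlocks w)) (trZ (trajOfBlocks w')) s ∧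
      Set.EqOn (trS (trajOfBlocks w)) (trS (trajOfBlocks w')) s ∧
      Set.EqOn (trU (trajOfBlocks w)) (trU (trajOfBlocks w')) s :=
  ⟨fun _ hi => congrArg (·.1) (h hi), fun _ hi => congrArg (·.2.1) (h hi),
    fun _ hi => congrArg (·.2.2.1) (h hi), fun _ hi => congrArg (·.2.2.2.1) (h hi),
    fun _ hi => congrArg (·.2.2.2.2) (h hi)⟩

/-- The conditional law of the block at time `t` given the past of the trajectory `ω`. -/
def stepPMF (K : Kernels X Y Z U) (πe : QPol T Z S U) (πc : CPol T S U) (t : Fin T)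
    (ω : Traj T X Y Z S U) : X × Y × Z × S × U → ℝ :=
  blockPMF (K.PX (prev3 (trX ω) (trY ω) (trU ω) t)) (K.PY (prevO (trY ω) t)) K.PZ
    (fun z => πe t (Fin.snoc (α := fun _ => Z) (hist (trZ ω) t) z) (hist (trS ω) t)
      (hist (trU ω) t))
    (fun s => πc t (Fin.snoc (α := fun _ => S) (hist (trS ω) t) s) (hist (trU ω) t))

variable {K : Kernels X Y Z U} {πe : QPol T Z S U} {πc : CPol T S U}

omit [Fintype S] in
theorem joint_trajOfBlocks (w : Fin T → X × Y × Z × S × U) :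
    joint K πe πc (trajOfBlocks w) =
      causalProd (fun t w => stepPMF K πe πc t (trajOfBlocks w)) w := by
  simp only [joint, trajOfBlocks, histIncl_eq_snoc]
  rfl

theorem sum_stepPMF (hπe : IsQPol πe) (hπc : IsCPol πc) (t : Fin T) (ω : Traj T X Y Z S U) :
    ∑ b, stepPMF K πe πc t ω b = 1 :=
  sum_blockPMF (K.PX_sum _) (K.PY_sum _) K.PZ_sum (fun _ => hπe.2 t _ _ _) fun _ => hπc.2 t _ _

theorem isCausalKernel_stepPMF (hπe : IsQPol πe) (hπc : IsCPol πc) :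
    IsCausalKernel (α := fun _ : Fin T => X × Y × Z × S × U)
      fun t w => stepPMF K πe πc t (trajOfBlocks w) where
  dependsOn t w w' h := by
    obtain ⟨hX, hY, hZ, hS, hU⟩ := eqOn_trajOfBlocks h
    simp only [stepPMF, prev3_congr hX hY hU, prevO_congr hY, hist_congr hZ, hist_congr hS,
      hist_congr hU]
  sum_eq_one t w := sum_stepPMF hπe hπc t (trajOfBlocks w)

theorem pr_joint_eq_mul (hπe : IsQPol πe) (hπc : IsCPol πc) {t : Fin T}
    {A E F : Traj T X Y Z S U → Prop} {B C : X × Y × Z × S × U → Prop} {q : ℝ}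
    (hA : DependsOn (A ∘ trajOfBlocks) (Set.Iio t))
    (hE : ∀ ω, E ω ↔ A ω ∧ B (trX ω t, trY ω t, trZ ω t, trS ω t, trU ω t))
    (hF : ∀ ω, F ω ↔ A ω ∧ C (trX ω t, trY ω t, trZ ω t, trS ω t, trU ω t))
    (hq : ∀ ω, A ω → pr (stepPMF K πe πc t ω) B = q * pr (stepPMF K πe πc t ω) C) :
    pr (joint K πe πc) E = q * pr (joint K πe πc) F := by
  have joint_comp : joint K πe πc ∘ trajOfBlocks =
      causalProd fun t w => stepPMF K πe πc t (trajOfBlocks w) := funext joint_trajOfBlocks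
  rw [funext fun ω => propext (hE ω), funext fun ω => propext (hF ω),
    ← pr_comp_equiv trajOfBlocks, ← pr_comp_equiv trajOfBlocks, joint_comp]
  exact (isCausalKernel_stepPMF hπe hπc).pr_causalProd_and_eq_mul hA fun w => hq (trajOfBlocks w)

theorem pr_joint_append_u (hπe : IsQPol πe) (hπc : IsCPol πc) (t : Fin T)
    (sI : Fin (t.1 + 1) → S) (uI : Fin (t.1 + 1) → U) :
    pr (joint K πe πc) (fun ω => histIncl (trS ω) t = sI ∧ histIncl (trU ω) t = uI) =
      πc t sI (trunc uI) (uI (Fin.last t.1)) *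
        pr (joint K πe πc) (fun ω => histIncl (trS ω) t = sI ∧ hist (trU ω) t = trunc uI) := by
  refine pr_joint_eq_mul hπe hπc (t := t)
    (A := fun ω => hist (trS ω) t = trunc sI ∧ hist (trU ω) t = trunc uI)
    (B := fun (_, _, _, s, u) => s = sI (Fin.last t.1) ∧ u = uI (Fin.last t.1))
    (C := fun (_, _, _, s, _) => s = sI (Fin.last t.1)) ?past_event ?_ ?_ ?block_law
  case past_event =>
    intro w w' h
    obtain ⟨-, -, -, hS, hU⟩ := eqOn_trajOfBlocks h
    simp only [Function.comp_apply, hist_congr hS, hist_congr hU]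
  case block_law =>
    rintro ω ⟨hs, hu⟩
    rw [stepPMF, pr_blockPMF_s_u fun s => hπc.2 t _ _, hs, hu, snoc_trunc_last]
  all_goals
    intro ω
    simp only [histIncl_eq_iff]
    tauto

theorem pr_joint_append_y_u (hπe : IsQPol πe) (hπc : IsCPol πc) (t : Fin T) (xt : X)
    (yI : Fin (t.1 + 1) → Y) (zI : Fin (t.1 + 1) → Z)
    (sI : Fin (t.1 + 1) → S) (uI : Fin (t.1 + 1) → U) :
    pr (joint K πe πc) (fun ω => trX ω t = xt ∧ histIncl (trY ω) t = yI ∧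
        histIncl (trZ ω) t = zI ∧ histIncl (trS ω) t = sI ∧ histIncl (trU ω) t = uI) =
      (if t.1 = 0 then K.PY none (yI (Fin.last t.1))
        else K.PY (some (yI ⟨t.1 - 1, Nat.sub_lt_succ t.1 1⟩)) (yI (Fin.last t.1))) *
        πc t sI (trunc uI) (uI (Fin.last t.1)) *
        pr (joint K πe πc) (fun ω => trX ω t = xt ∧ hist (trY ω) t = trunc yI ∧
          histIncl (trZ ω) t = zI ∧ histIncl (trS ω) t = sI ∧ hist (trU ω) t = trunc uI) := by
  refine pr_joint_eq_mul hπe hπc (t := t)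
    (A := fun ω => hist (trY ω) t = trunc yI ∧ hist (trZ ω) t = trunc zI ∧
      hist (trS ω) t = trunc sI ∧ hist (trU ω) t = trunc uI)
    (B := fun (x, y, z, s, u) => x = xt ∧ y = yI (Fin.last t.1) ∧ z = zI (Fin.last t.1) ∧
      s = sI (Fin.last t.1) ∧ u = uI (Fin.last t.1))
    (C := fun (x, _, z, s, _) => x = xt ∧ z = zI (Fin.last t.1) ∧ s = sI (Fin.last t.1))
    ?past_event ?_ ?_ ?block_law
  case past_event =>
    intro w w' h
    obtain ⟨-, hY, hZ, hS, hU⟩ := eqOn_trajOfBlocks h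
    simp only [Function.comp_apply, hist_congr hY, hist_congr hZ, hist_congr hS, hist_congr hU]
  case block_law =>
    rintro ω ⟨hy, -, hs, hu⟩
    rw [stepPMF, pr_blockPMF_eq (K.PY_sum _) fun s => hπc.2 t _ _, prevO_eq_of_hist_eq hy, hs, hu,
      snoc_trunc_last]
    split_ifs <;> rfl
  all_goals
    intro ω
    simp only [histIncl_eq_iff]
    tauto

theorem pr_joint_append_x_z (hπe : IsQPol πe) (hπc : IsCPol πc) {t : Fin T} (ht : t.1 + 1 < T)
    (x' : X) (z' : Z) (xt : X) (yI : Fin (t.1 + 1) → Y) (zI : Fin (t.1 + 1) → Z)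
    (sI : Fin (t.1 + 1) → S) (uI : Fin (t.1 + 1) → U) :
    pr (joint K πe πc) (fun ω => (trX ω ⟨t.1 + 1, ht⟩ = x' ∧ trZ ω ⟨t.1 + 1, ht⟩ = z') ∧
        trX ω t = xt ∧ histIncl (trY ω) t = yI ∧ histIncl (trZ ω) t = zI ∧
        histIncl (trS ω) t = sI ∧ histIncl (trU ω) t = uI) =
      K.PX (some (xt, yI (Fin.last t.1), uI (Fin.last t.1))) x' * K.PZ x' z' *
        pr (joint K πe πc) (fun ω => trX ω t = xt ∧ histIncl (trY ω) t = yI ∧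
          histIncl (trZ ω) t = zI ∧ histIncl (trS ω) t = sI ∧ histIncl (trU ω) t = uI) := by
  refine pr_joint_eq_mul hπe hπc (t := ⟨t.1 + 1, ht⟩)
    (B := fun (x, _, z, _, _) => x = x' ∧ z = z') (C := fun _ => True)
    ?past_event (fun ω => and_comm) (fun ω => (and_iff_left trivial).symm) ?block_law
  case past_event =>
    intro w w' h
    have h_le : Set.EqOn w w' (Set.Iic t) := fun i hi => h i (Nat.lt_succ_of_le hi)
    obtain ⟨hX, hY, hZ, hS, hU⟩ := eqOn_trajOfBlocks h_le
    simp only [Function.comp_apply, hX (Set.mem_Iic.mpr le_rfl), histIncl_congr hY,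
      histIncl_congr hZ, histIncl_congr hS, histIncl_congr hU]
  case block_law =>
    rintro ω ⟨rfl, rfl, -, -, rfl⟩
    have total : pr (stepPMF K πe πc ⟨t.1 + 1, ht⟩ ω) (fun _ => True) = 1 := by
      simp [pr, sum_stepPMF hπe hπc]
    rw [total, mul_one, stepPMF, pr_blockPMF_x_z (K.PY_sum _) (fun z => hπe.2 _ _ _ _)
      fun s => hπc.2 _ _ _, prev3_succ]
    rfl

theorem pr_joint_belief_succ (hπe : IsQPol πe) (hπc : IsCPol πc) {t : Fin T} (ht : t.1 + 1 < T)
    (x' xt : X) (yI : Fin (t.1 + 1) → Y) (zI : Fin (t.1 + 1 + 1) → Z)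
    (sI : Fin (t.1 + 1) → S) (uI : Fin (t.1 + 1) → U) :
    pr (joint K πe πc) (fun ω => ((trX ω ⟨t.1 + 1, ht⟩ = x' ∧ histIncl (trY ω) t = yI ∧
        histIncl (trZ ω) ⟨t.1 + 1, ht⟩ = zI) ∧
        histIncl (trS ω) t = sI ∧ histIncl (trU ω) t = uI) ∧ trX ω t = xt) =
      K.PZ x' (zI (Fin.last (t.1 + 1))) *
        K.PX (some (xt, yI (Fin.last t.1), uI (Fin.last t.1))) x' *
        (if t.1 = 0 then K.PY none (yI (Fin.last t.1))
          else K.PY (some (yI ⟨t.1 - 1, Nat.sub_lt_succ t.1 1⟩)) (yI (Fin.last t.1))) *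
        πc t sI (trunc uI) (uI (Fin.last t.1)) *
        pr (joint K πe πc) (fun ω => (trX ω t = xt ∧ hist (trY ω) t = trunc yI ∧
          histIncl (trZ ω) t = trunc zI) ∧
          histIncl (trS ω) t = sI ∧ hist (trU ω) t = trunc uI) := by
  have append_x_z := pr_joint_append_x_z (K := K) hπe hπc ht x' (zI (Fin.last (t.1 + 1))) xt yI
    (trunc zI) sI uI
  rw [pr_joint_append_y_u hπe hπc] at append_x_z
  simp only [and_assoc] at append_x_z ⊢
  calc _ = _ := by
        congr! 3
        simp only [histIncl_succ_eq_iff]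
        tauto
    _ = _ := append_x_z
    _ = _ := by ring

end StepPMF

/-- Forward belief propagation: for `t ∈ {1, …, T−1}` and
histories `(s^t, u^t)` of positive probability,
`P(X_{t+1} = x', Y^t = y^t, Z^{t+1} = z^{t+1} | S^t = s^t, U^t = u^t)
  = Σ_{x_t} P_Z(z_{t+1} | x') · P_X(x' | x_t, y_t, u_t) · P_Y(y_t | y_{t-1}) ·
      P(X_t = x_t, Y^{t-1} = y^{t-1}, Z^t = z^t | S^t = s^t, U^{t-1} = u^{t-1})`,
with vacuous conditioning of `P_Y` at `t = 1`. -/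
theorem belief_forward_propagation
    [Nonempty X] [Nonempty Y] [Nonempty Z] [Nonempty S] [Nonempty U]
    (K : Kernels X Y Z U)
    (πe : QPol T Z S U) (πc : CPol T S U) (hπe : IsQPol πe) (hπc : IsCPol πc)
    (t : Fin T) (ht : t.1 + 1 < T)
    (sI : Fin (t.1 + 1) → S) (uI : Fin (t.1 + 1) → U)
    (hpos : 0 < pr (joint K πe πc)
      (fun ω => histIncl (trS ω) t = sI ∧ histIncl (trU ω) t = uI))
    (x' : X) (yI : Fin (t.1 + 1) → Y) (zI : Fin (t.1 + 1 + 1) → Z) :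
    condPr (joint K πe πc)
      (fun ω => trX ω ⟨t.1 + 1, ht⟩ = x' ∧ histIncl (trY ω) t = yI ∧
        histIncl (trZ ω) ⟨t.1 + 1, ht⟩ = zI)
      (fun ω => histIncl (trS ω) t = sI ∧ histIncl (trU ω) t = uI) =
    ∑ xt : X,
      K.PZ x' (zI (Fin.last (t.1 + 1))) *
      K.PX (some (xt, yI (Fin.last t.1), uI (Fin.last t.1))) x' *
      (if t.1 = 0 then K.PY none (yI (Fin.last t.1))
       else K.PY (some (yI ⟨t.1 - 1, by omega⟩)) (yI (Fin.last t.1))) *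
      condPr (joint K πe πc)
        (fun ω => trX ω t = xt ∧ hist (trY ω) t = trunc yI ∧
          histIncl (trZ ω) t = trunc zI)
        (fun ω => histIncl (trS ω) t = sI ∧ hist (trU ω) t = trunc uI) := by
  have policy_ne_zero : πc t sI (trunc uI) (uI (Fin.last t.1)) ≠ 0 := by
    intro h
    simp [pr_joint_append_u hπe hπc, h] at hpos
  unfold condPr
  rw [pr_eq_sum_pr_and_eq _ _ fun ω => trX ω t, pr_joint_append_u hπe hπc, Finset.sum_div]
  refine Finset.sum_congr rfl fun xt _ => ?_
  rw [pr_joint_belief_succ hπe hπc ht, mul_assoc, mul_left_comm,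
    mul_div_mul_left _ _ policy_ne_zero, mul_div_assoc]

end NCS
end
end
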